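/- (Lemma 3.2, being high sometimes.) Fix p, M ∈ (0,∞). There exists N2 ∈ ℕ, depending on p and M, such that the following holds: for all M1, M2 ∈ ℝ with |M1 − M2| ≤ M, every integer n ≥ N2, all x, y ∈ ℤ with x ≤ y, x ≥ M1·n^{1/2} and y ≥ p·n + M2·n^{1/2}, every function g : ⟦0,n⟧ → [−∞,∞) such that Ω_Inter(0,n,x,y,∞,g) ≠ ∅, and every s ∈ [0,n]: if Q is distributed according to the uniform probability measure on Ω_Inter(0,n,x,y,∞,g) (k = 1, path extended to [0,n] by linear interpolation), then P( Q(s) ≥ ((n−s)/n)·M1·n^{1/2} + (s/n)·(p·n + M2·n^{1/2}) − 3·n^{1/4} ) ≥ 1/3. -/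

import Mathlib

open MeasureTheory Filter Topology ProbabilityTheory
open scoped ENNReal NNReal

/-- An increasing (integer) path on the integer interval `⟦T0, T1⟧`,
extended constantly to the rest of `ℤ`. -/
def IncrPath (T0 T1 : ℤ) (L : ℤ → ℤ) : Prop :=
  (∀ j : ℤ, T0 ≤ j → j < T1 → L j ≤ L (j + 1)) ∧
  (∀ s : ℤ, s ≤ T0 → L s = L T0) ∧ (∀ s : ℤ, T1 ≤ s → L s = L T1)

/-- The set `Ω(T0,T1,x,y)` of increasing paths from `(T0,x)` to `(T1,y)`. -/
def OmegaPath (T0 T1 : ℤ) (x y : ℤ) : Set (ℤ → ℤ) :=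
  {L | IncrPath T0 T1 L ∧ L T0 = x ∧ L T1 = y}

/-- Linear interpolation of a real-valued function defined on `ℤ`. -/
noncomputable def interp (f : ℤ → ℝ) (t : ℝ) : ℝ :=
  f ⌊t⌋ + (t - ⌊t⌋) * (f (⌊t⌋ + 1) - f ⌊t⌋)

/-- Linear interpolation of an integer-valued function on `ℤ`. -/
noncomputable def interpZ (L : ℤ → ℤ) : ℝ → ℝ :=
  interp fun s => (L s : ℝ)

lemma interp_eq_on (f : ℤ → ℝ) (n : ℤ) :
    ∀ t ∈ Set.Icc (n : ℝ) ((n : ℝ) + 1),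
      interp f t = f n + (t - n) * (f (n + 1) - f n) := by
  intro t ht
  rcases lt_or_eq_of_le ht.2 with h | h
  · have hfl : ⌊t⌋ = n := by
      rw [Int.floor_eq_iff]
      · exact ⟨ht.1, by exact_mod_cast h⟩
    simp [interp, hfl]
  · have hfl : ⌊t⌋ = n + 1 := by
      rw [h, show ((n : ℝ) + 1) = ((n + 1 : ℤ) : ℝ) by push_cast; ring, Int.floor_intCast]
    rw [interp, hfl, h]
    push_cast
    ring

lemma continuous_interp (f : ℤ → ℝ) : Continuous (interp f) := by
  have hcov : (⋃ n : ℤ, Set.Icc (n : ℝ) ((n : ℝ) + 1)) = Set.univ := by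
    ext t
    simp only [Set.mem_iUnion, Set.mem_univ, iff_true, Set.mem_Icc]
    exact ⟨⌊t⌋, Int.floor_le t, (Int.lt_floor_add_one t).le⟩
  have hlf : LocallyFinite fun n : ℤ => Set.Icc (n : ℝ) ((n : ℝ) + 1) := by
    intro x
    refine ⟨Set.Ioo (x - 1) (x + 1), Ioo_mem_nhds (by linarith) (by linarith), ?_⟩
    apply Set.Finite.subset (Set.finite_Icc (⌊x⌋ - 2) (⌊x⌋ + 2))
    rintro n ⟨t, ht1, ht2⟩
    simp only [Set.mem_Icc] at ht1 ⊢
    simp only [Set.mem_Ioo] at ht2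
    constructor
    · have h1 : ((⌊x⌋ - 2 : ℤ) : ℝ) < n := by
        push_cast
        have := Int.floor_le x
        linarith [ht1.2, ht2.1]
      exact_mod_cast h1.le
    · have h2 : (n : ℝ) < ((⌊x⌋ + 2 : ℤ) : ℝ) := by
        push_cast
        have := Int.lt_floor_add_one x
        linarith [ht1.1, ht2.2]
      exact_mod_cast h2.le
  refine hlf.continuous hcov (fun n => isClosed_Icc) (fun n => ?_)
  have hc : ContinuousOn (fun t : ℝ => f n + (t - n) * (f (n + 1) - f n))
      (Set.Icc (n : ℝ) ((n : ℝ) + 1)) := (by continuity : Continuous _).continuousOn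
  exact hc.congr (interp_eq_on f n)

/-- The set `Ω_Inter(T0,T1,x,y,∞,g)` for a single curve: increasing paths from `(T0,x)`
to `(T1,y)` staying above the lower boundary `g`, in the interlacing sense. -/
def OmegaInterOne (T0 T1 : ℤ) (x y : ℤ) (g : ℤ → EReal) : Set (ℤ → ℤ) :=
  {L | IncrPath T0 T1 L ∧ L T0 = x ∧ L T1 = y ∧
    ∀ r : ℤ, T0 < r → r ≤ T1 → g r ≤ ((L (r - 1) : ℝ) : EReal)}

/-- The random variable `X` is uniformly distributed on the (finite) set `S` under `P`. -/
def UniformOn {Ω E : Type*} [MeasurableSpace Ω] (P : Measure Ω) (X : Ω → E)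
    (S : Set E) : Prop :=
  (∀ ω, X ω ∈ S) ∧ ∀ Q ∈ S, P {ω | X ω = Q} = ((Nat.card S : ℝ≥0∞))⁻¹

/-!
By Daykin's inequality `|A| |B| ≤ |A ∧ B| |A ∨ B|` in the distributive lattice `ℤ → ℤ`, applied to
two sets of paths, the uniform bridge above `g` from `x` to `y` stochastically dominates the
unconstrained bridge between any lower endpoints. For the latter, exchanging the increments before
and after a given time is a bijection, so its mean is exactly linear in time. Daykin's inequality
once more, now with one of the two sets of paths shifted up by one, shows that the tail of its
height at a given time is log-concave.

A log-concave tail satisfies Grünbaum's inequality: the mean is reached with probability at least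
`e⁻¹ > 1/3`. Indeed, if `c k` of `N` outcomes are at least `k`, then `N! ≤ ∏ c (X a)` over the
outcomes `a`, while log-concavity gives `c k ≤ c m * r ^ (k - m)` with `r ≤ 1`, and the product of
these bounds is at most `c m ^ N` when `m` is at most the mean of `X`; finally `N ^ N ≤ e ^ N * N!`.
Rounding the endpoints, the height and the time costs `O(1)`, which the error term absorbs.
-/

open scoped Finset FinsetFamily

/-! ### Grünbaum's inequality for log-concave tails -/

lemma factorial_card_le_prod_card_filter_le {α β : Type*} [LinearOrder β] (S : Finset α)
    (X : α → β) : (#S).factorial ≤ ∏ a ∈ S, #{b ∈ S | X a ≤ X b} := by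
  classical
  induction S using Finset.induction_on_min_value X with
  | empty => simp
  | insert a S ha hmin ih =>
    have htop : {b ∈ insert a S | X a ≤ X b} = insert a S :=
      Finset.filter_true_of_mem (by simpa using hmin)
    rw [Finset.prod_insert ha, htop, Finset.card_insert_of_notMem ha, Nat.factorial_succ]
    gcongr
    exact ih.trans <| Finset.prod_le_prod' fun b _ => Finset.card_le_card <|
      Finset.filter_subset_filter _ (Finset.subset_insert a S)

/-- Log-concavity of a two-sided sequence, `c (k + 1) * c (k - 1) ≤ c k ^ 2`; it is applied to the
tail counts `k ↦ #{a | k ≤ X a}` of an integer statistic. Internal zeros are not excluded. -/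
def IsLogConcave {R : Type*} [Monoid R] [LE R] (c : ℤ → R) : Prop :=
  ∀ k, c (k + 1) * c (k - 1) ≤ c k ^ 2

namespace IsLogConcave

theorem mul_succ_le_mul_succ {R : Type*} [CommSemiring R] [LinearOrder R] [IsStrictOrderedRing R]
    {c : ℤ → R} (hlc : IsLogConcave c) (hanti : Antitone c) (hnonneg : ∀ k, 0 ≤ c k) {k l : ℤ}
    (hkl : k ≤ l) : c (l + 1) * c k ≤ c l * c (k + 1) := by
  induction l, hkl using Int.leInduction with
  | base => exact (mul_comm _ _).le
  | succ l _ ih =>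
    have hstep : c (l + 1 + 1) * c l ≤ c (l + 1) ^ 2 := by simpa using hlc (l + 1)
    rcases (hnonneg (l + 1)).eq_or_lt with hzero | hpos
    · have : c (l + 1 + 1) = 0 :=
        le_antisymm (hzero ▸ hanti (by omega : l + 1 ≤ l + 1 + 1)) (hnonneg _)
      simp [this, ← hzero]
    · have hl : 0 < c l := hpos.trans_le (hanti (by omega))
      refine le_of_mul_le_mul_right ?_ hl
      calc c (l + 1 + 1) * c k * c l = c (l + 1 + 1) * c l * c k := by ring
        _ ≤ c (l + 1) ^ 2 * c k := mul_le_mul_of_nonneg_right hstep (hnonneg k)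
        _ = c (l + 1) * (c (l + 1) * c k) := by ring
        _ ≤ c (l + 1) * (c l * c (k + 1)) := by gcongr
        _ = c (l + 1) * c (k + 1) * c l := by ring

theorem le_mul_zpow {K : Type*} [Field K] [LinearOrder K] [IsStrictOrderedRing K]
    {c : ℤ → K} (hlc : IsLogConcave c) (hanti : Antitone c) (hnonneg : ∀ k, 0 ≤ c k) {m : ℤ}
    (hm : 0 < c m) (k : ℤ) : c k ≤ c m * (c m / c (m - 1)) ^ (k - m) := by
  have hm' : 0 < c (m - 1) := hm.trans_le (hanti (by omega))
  set r : K := c m / c (m - 1) with hr_def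
  have hr : 0 < r := div_pos hm hm'
  rcases le_total m k with hk | hk
  · induction k, hk using Int.leInduction with
    | base => simp
    | succ k hk ih =>
      have hratio : c (k + 1) * c (m - 1) ≤ c k * c m := by
        simpa using hlc.mul_succ_le_mul_succ hanti hnonneg (by omega : m - 1 ≤ k)
      calc c (k + 1) ≤ c k * r := by rwa [hr_def, ← mul_div_assoc, le_div_iff₀ hm']
        _ ≤ c m * r ^ (k - m) * r := by gcongr
        _ = c m * r ^ (k + 1 - m) := by
            rw [mul_assoc, ← zpow_add_one₀ hr.ne', sub_add_eq_add_sub]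
  · induction k, hk using Int.leInductionDown with
    | base => simp
    | pred k hk ih =>
      have hratio : c m * c (k - 1) ≤ c (m - 1) * c k := by
        simpa using hlc.mul_succ_le_mul_succ hanti hnonneg (by omega : k - 1 ≤ m - 1)
      calc c (k - 1) ≤ c k * r⁻¹ := by
            rw [hr_def, inv_div, ← mul_div_assoc, le_div_iff₀ hm]
            linarith
        _ ≤ c m * r ^ (k - m) * r⁻¹ := by gcongr
        _ = c m * r ^ (k - 1 - m) := by rw [mul_assoc, ← zpow_sub_one₀ hr.ne', sub_right_comm]

end IsLogConcave

theorem factorial_card_le_card_filter_le_pow {α : Type*} {S : Finset α} {X : α → ℤ}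
    (hlc : IsLogConcave fun k => #{a ∈ S | k ≤ X a}) {m : ℤ} (hm : m * #S ≤ ∑ a ∈ S, X a) :
    (#S).factorial ≤ #{a ∈ S | m ≤ X a} ^ #S := by
  rcases S.eq_empty_or_nonempty with rfl | hS
  · simp
  set c : ℤ → ℝ := fun k => #{a ∈ S | k ≤ X a} with hc
  have hlc' : IsLogConcave c := fun k => by
    simp only [hc]
    exact_mod_cast hlc k
  have hnonneg : ∀ k, 0 ≤ c k := fun k => Nat.cast_nonneg _
  have hanti : Antitone c := fun k l hkl => Nat.cast_le.2 <| Finset.card_le_card <|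
    Finset.monotone_filter_right S fun _ _ ha => hkl.trans ha
  have hpos : 0 < c m := by
    obtain ⟨a, ha, hma⟩ : ∃ a ∈ S, m ≤ X a :=
      Finset.exists_le_of_sum_le hS (by simpa [mul_comm] using hm)
    exact Nat.cast_pos.2 (Finset.card_pos.2 ⟨a, Finset.mem_filter.2 ⟨ha, hma⟩⟩)
  have hpos' : 0 < c (m - 1) := hpos.trans_le (hanti (by omega))
  set r : ℝ := c m / c (m - 1)
  have hr0 : 0 < r := div_pos hpos hpos'
  have hr1 : r ≤ 1 := div_le_one_of_le₀ (hanti (by omega)) hpos'.le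
  have hdrift : 0 ≤ ∑ a ∈ S, ((X a - m : ℤ) : ℝ) := by
    rw [← Int.cast_sum, Finset.sum_sub_distrib, Finset.sum_const, nsmul_eq_mul, mul_comm]
    exact_mod_cast sub_nonneg.2 hm
  have hpow : ((#S).factorial : ℝ) ≤ c m ^ #S := by
    calc ((#S).factorial : ℝ) ≤ ∏ a ∈ S, c (X a) := by
          simp only [hc]
          exact_mod_cast factorial_card_le_prod_card_filter_le S X
      _ ≤ ∏ a ∈ S, c m * r ^ (X a - m) := Finset.prod_le_prod (fun a _ => hnonneg _) fun a _ =>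
          hlc'.le_mul_zpow hanti hnonneg hpos _
      _ = c m ^ #S * r ^ ∑ a ∈ S, ((X a - m : ℤ) : ℝ) := by
          simp only [Finset.prod_mul_distrib, Finset.prod_const, Real.rpow_sum_of_pos hr0,
            Real.rpow_intCast]
      _ ≤ c m ^ #S := mul_le_of_le_one_right (by positivity)
          (Real.rpow_le_one hr0.le hr1 hdrift)
  simp only [hc] at hpow
  exact_mod_cast hpow

lemma exp_neg_one_mul_le_of_factorial_le_pow {N : ℕ} {c : ℝ} (hc : 0 ≤ c)
    (h : (N.factorial : ℝ) ≤ c ^ N) : Real.exp (-1) * N ≤ c := by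
  rcases eq_or_ne N 0 with rfl | hN
  · simpa using hc
  have hstirling : (N : ℝ) ^ N ≤ Real.exp N * N.factorial := by
    rw [← div_le_iff₀ (by positivity)]
    exact Real.pow_div_factorial_le_exp _ (Nat.cast_nonneg _) _
  refine (pow_le_pow_iff_left₀ (by positivity) hc hN).1 ?_
  calc (Real.exp (-1) * N) ^ N = Real.exp (-N) * (N : ℝ) ^ N := by
        rw [mul_pow, ← Real.exp_nat_mul, mul_neg_one]
    _ ≤ Real.exp (-N) * (Real.exp N * N.factorial) := by gcongr
    _ = N.factorial := by
        rw [← mul_assoc, ← Real.exp_add, neg_add_cancel, Real.exp_zero, one_mul]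
    _ ≤ c ^ N := h

theorem exp_neg_one_mul_card_le_card_filter_le {α : Type*} {S : Finset α} {X : α → ℤ}
    (hlc : IsLogConcave fun k => #{a ∈ S | k ≤ X a}) {m : ℤ} (hm : m * #S ≤ ∑ a ∈ S, X a) :
    Real.exp (-1) * #S ≤ #{a ∈ S | m ≤ X a} :=
  exp_neg_one_mul_le_of_factorial_le_pow (Nat.cast_nonneg _) <| by
    exact_mod_cast factorial_card_le_card_filter_le_pow hlc hm

/-! ### Counting in distributive lattices -/

theorem card_filter_mul_card_le_of_inf_mem_of_sup_mem {α : Type*} [DistribLattice α]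
    {S T : Finset α} (hinf : ∀ a ∈ S, ∀ b ∈ T, a ⊓ b ∈ S) (hsup : ∀ a ∈ S, ∀ b ∈ T, a ⊔ b ∈ T)
    {p : α → Prop} [DecidablePred p] (hp : IsUpperSet {a | p a}) :
    #{a ∈ S | p a} * #T ≤ #S * #{b ∈ T | p b} := by
  classical
  refine (Finset.le_card_infs_mul_card_sups _ _).trans ?_
  gcongr <;> intro d hd
  · obtain ⟨a, ha, b, hb, rfl⟩ := Finset.mem_infs.1 hd
    exact hinf a (Finset.mem_filter.1 ha).1 b hb
  · obtain ⟨a, ha, b, hb, rfl⟩ := Finset.mem_sups.1 hd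
    rw [Finset.mem_filter] at ha
    exact Finset.mem_filter.2 ⟨hsup a ha.1 b hb, hp le_sup_left ha.2⟩

theorem isLogConcave_card_filter_le_apply {ι : Type*} {S : Finset (ι → ℤ)}
    (hinf : ∀ K ∈ S, ∀ L ∈ S, K ⊓ (L + 1) ∈ S) (hsup : ∀ K ∈ S, ∀ L ∈ S, (K - 1) ⊔ L ∈ S)
    (i : ι) : IsLogConcave fun k => #{L ∈ S | k ≤ L i} := by
  classical
  intro k
  beta_reduce
  have hcard (T : Finset (ι → ℤ)) : #(T.image (· + 1)) = #T :=
    Finset.card_image_of_injective T (add_left_injective 1)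
  rw [← hcard {L ∈ S | k - 1 ≤ L i}, sq]
  refine (Finset.le_card_infs_mul_card_sups _ _).trans ?_
  nth_rewrite 4 [← hcard]
  gcongr <;> intro J hJ
  · obtain ⟨K, hK, _, hL', rfl⟩ := Finset.mem_infs.1 hJ
    obtain ⟨L, hL, rfl⟩ := Finset.mem_image.1 hL'
    rw [Finset.mem_filter] at hK hL ⊢
    refine ⟨hinf K hK.1 L hL.1, ?_⟩
    simp only [Pi.inf_apply, Pi.add_apply, Pi.one_apply]
    omega
  · obtain ⟨K, hK, _, hL', rfl⟩ := Finset.mem_sups.1 hJ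
    obtain ⟨L, hL, rfl⟩ := Finset.mem_image.1 hL'
    rw [Finset.mem_filter] at hK hL
    refine Finset.mem_image.2 ⟨(K - 1) ⊔ L, Finset.mem_filter.2 ⟨hsup K hK.1 L hL.1, ?_⟩, ?_⟩
    · simp only [Pi.sup_apply, Pi.sub_apply, Pi.one_apply]
      omega
    · simp only [sup_add, sub_add_cancel]

/-! ### Increasing paths and bridges -/

namespace IncrPath

variable {T0 T1 : ℤ} {K L : ℤ → ℤ}

lemma monotone (h : IncrPath T0 T1 L) : Monotone L := by
  refine monotone_int_of_le_succ fun j => ?_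
  rcases lt_or_ge j T0 with hj | hj
  · rw [h.2.1 j hj.le, h.2.1 (j + 1) (by omega)]
  rcases lt_or_ge j T1 with hj' | hj'
  · exact h.1 j hj hj'
  · rw [h.2.2 j hj', h.2.2 (j + 1) (by omega)]

lemma inf (hK : IncrPath T0 T1 K) (hL : IncrPath T0 T1 L) : IncrPath T0 T1 (K ⊓ L) :=
  ⟨fun j h0 h1 => inf_le_inf (hK.1 j h0 h1) (hL.1 j h0 h1),
    fun s hs => by simp only [Pi.inf_apply, hK.2.1 s hs, hL.2.1 s hs],
    fun s hs => by simp only [Pi.inf_apply, hK.2.2 s hs, hL.2.2 s hs]⟩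

lemma sup (hK : IncrPath T0 T1 K) (hL : IncrPath T0 T1 L) : IncrPath T0 T1 (K ⊔ L) :=
  ⟨fun j h0 h1 => sup_le_sup (hK.1 j h0 h1) (hL.1 j h0 h1),
    fun s hs => by simp only [Pi.sup_apply, hK.2.1 s hs, hL.2.1 s hs],
    fun s hs => by simp only [Pi.sup_apply, hK.2.2 s hs, hL.2.2 s hs]⟩

lemma add_const (h : IncrPath T0 T1 L) (a : ℤ) : IncrPath T0 T1 fun j => L j + a :=
  ⟨fun j h0 h1 => add_le_add_left (h.1 j h0 h1) a,
    fun s hs => by simp only [h.2.1 s hs], fun s hs => by simp only [h.2.2 s hs]⟩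

lemma apply_le_interpZ (h : IncrPath T0 T1 L) (s : ℝ) : (L ⌊s⌋ : ℝ) ≤ interpZ L s := by
  have hstep : (L ⌊s⌋ : ℝ) ≤ L (⌊s⌋ + 1) := by exact_mod_cast h.monotone (by omega)
  exact le_add_of_nonneg_right
    (mul_nonneg (sub_nonneg.2 (Int.floor_le s)) (sub_nonneg.2 hstep))

end IncrPath

/-- Reflects the height `L i` in the midpoint of the neighbouring heights `L (i - 1)` and
`L (i + 1)`, swapping the increments of `L` just before and just after time `i`. -/
def reflectAt (i : ℤ) (L : ℤ → ℤ) : ℤ → ℤ :=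
  Function.update L i (L (i - 1) + L (i + 1) - L i)

section ReflectAt

variable {i j T0 T1 : ℤ} {L : ℤ → ℤ}

lemma reflectAt_self : reflectAt i L i = L (i - 1) + L (i + 1) - L i :=
  Function.update_self ..

lemma reflectAt_of_ne (h : j ≠ i) : reflectAt i L j = L j :=
  Function.update_of_ne h ..

lemma reflectAt_involutive (i : ℤ) : Function.Involutive (reflectAt i) := by
  intro L
  funext j
  rcases eq_or_ne j i with rfl | hj
  · rw [reflectAt_self, reflectAt_self, reflectAt_of_ne (by omega), reflectAt_of_ne (by omega)]
    ring
  · rw [reflectAt_of_ne hj, reflectAt_of_ne hj]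

lemma IncrPath.reflectAt (h : IncrPath T0 T1 L) (hi : i ∈ Set.Ioo T0 T1) :
    IncrPath T0 T1 (reflectAt i L) := by
  obtain ⟨h0, h1⟩ := hi
  refine ⟨fun j _ _ => ?_, fun s hs => ?_, fun s hs => ?_⟩
  · have hleft := h.monotone (by omega : i - 1 ≤ i)
    have hright := h.monotone (by omega : i ≤ i + 1)
    rcases eq_or_ne j i with rfl | hj
    · rw [reflectAt_self, reflectAt_of_ne (by omega)]
      omega
    rcases eq_or_ne (j + 1) i with rfl | hj'
    · rw [reflectAt_self, reflectAt_of_ne hj, add_sub_cancel_right]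
      omega
    · rw [reflectAt_of_ne hj, reflectAt_of_ne hj']
      exact h.monotone (by omega)
  · rw [reflectAt_of_ne (by omega), reflectAt_of_ne (by omega), h.2.1 s hs]
  · rw [reflectAt_of_ne (by omega), reflectAt_of_ne (by omega), h.2.2 s hs]

end ReflectAt

lemma finite_omegaPath (T0 T1 x y : ℤ) : (OmegaPath T0 T1 x y).Finite := by
  refine Set.Finite.of_injOn (f := fun L (i : Set.Icc T0 T1) => L i)
    (t := Set.Icc (fun _ => x) (fun _ => y)) ?_ ?_ (Set.finite_Icc _ _)
  · rintro L ⟨hL, rfl, rfl⟩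
    exact ⟨fun i => hL.monotone i.2.1, fun i => hL.monotone i.2.2⟩
  · rintro K ⟨hK, hK0, hK1⟩ L ⟨hL, hL0, hL1⟩ hKL
    funext i
    rcases le_total i T0 with hi | hi
    · rw [hK.2.1 i hi, hL.2.1 i hi, hK0, hL0]
    rcases le_total T1 i with hi' | hi'
    · rw [hK.2.2 i hi', hL.2.2 i hi', hK1, hL1]
    · exact congrFun hKL ⟨i, hi, hi'⟩

lemma finite_omegaInterOne (T0 T1 x y : ℤ) (g : ℤ → EReal) : (OmegaInterOne T0 T1 x y g).Finite :=
  (finite_omegaPath T0 T1 x y).subset fun _ hL => ⟨hL.1, hL.2.1, hL.2.2.1⟩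

section OmegaInterOne

variable {T0 T1 x x' y y' : ℤ} {g g' : ℤ → EReal} {K L : ℤ → ℤ}

lemma inf_mem_omegaInterOne (hK : K ∈ OmegaInterOne T0 T1 x y g)
    (hL : L ∈ OmegaInterOne T0 T1 x' y' g') (hx : x ≤ x') (hy : y ≤ y') (hg : g ≤ g') :
    K ⊓ L ∈ OmegaInterOne T0 T1 x y g := by
  obtain ⟨hK, rfl, rfl, hKg⟩ := hK
  obtain ⟨hL, rfl, rfl, hLg⟩ := hL
  refine ⟨hK.inf hL, inf_of_le_left hx, inf_of_le_left hy, fun r h0 h1 => ?_⟩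
  rcases le_total (K (r - 1)) (L (r - 1)) with h | h
  · rw [Pi.inf_apply, inf_of_le_left h]
    exact hKg r h0 h1
  · rw [Pi.inf_apply, inf_of_le_right h]
    exact (hg r).trans (hLg r h0 h1)

lemma sup_mem_omegaInterOne (hK : K ∈ OmegaInterOne T0 T1 x y g)
    (hL : L ∈ OmegaInterOne T0 T1 x' y' g') (hx : x ≤ x') (hy : y ≤ y') :
    K ⊔ L ∈ OmegaInterOne T0 T1 x' y' g' := by
  obtain ⟨hK, rfl, rfl, -⟩ := hK
  obtain ⟨hL, rfl, rfl, hLg⟩ := hL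
  refine ⟨hK.sup hL, sup_of_le_right hx, sup_of_le_right hy, fun r h0 h1 => ?_⟩
  exact (hLg r h0 h1).trans <| EReal.coe_le_coe_iff.2 <| Int.cast_le.2 le_sup_right

lemma add_const_mem_omegaInterOne (hL : L ∈ OmegaInterOne T0 T1 x y g) (a : ℤ) :
    (fun j => L j + a) ∈ OmegaInterOne T0 T1 (x + a) (y + a) fun r => g r + ((a : ℝ) : EReal) := by
  obtain ⟨hL, rfl, rfl, hLg⟩ := hL
  refine ⟨hL.add_const a, rfl, rfl, fun r h0 h1 => ?_⟩
  rw [Int.cast_add, EReal.coe_add]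
  exact add_le_add_left (hLg r h0 h1) _

lemma nonempty_omegaInterOne_bot (hT : T0 < T1) (hxy : x ≤ y) :
    (OmegaInterOne T0 T1 x y ⊥).Nonempty := by
  refine ⟨fun i => if i < T1 then x else y, ⟨fun j _ _ => ?_, fun s hs => ?_, fun s hs => ?_⟩,
    if_pos hT, if_neg (lt_irrefl T1), fun _ _ _ => bot_le⟩ <;>
    beta_reduce <;> split_ifs <;> omega

lemma reflectAt_mem_omegaInterOne_bot {i : ℤ} (hL : L ∈ OmegaInterOne T0 T1 x y ⊥)
    (hi : i ∈ Set.Ioo T0 T1) : reflectAt i L ∈ OmegaInterOne T0 T1 x y ⊥ := by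
  obtain ⟨hL, rfl, rfl, -⟩ := hL
  exact ⟨hL.reflectAt hi, reflectAt_of_ne hi.1.ne, reflectAt_of_ne hi.2.ne', fun _ _ _ => bot_le⟩

end OmegaInterOne

/-- The elements of `OmegaInterOne T0 T1 x y g` as a `Finset`, for the counting arguments.
The unconstrained bridge is the case `g = ⊥`. -/
noncomputable def bridges (T0 T1 x y : ℤ) (g : ℤ → EReal) : Finset (ℤ → ℤ) :=
  (finite_omegaInterOne T0 T1 x y g).toFinset

lemma mem_bridges {T0 T1 x y : ℤ} {g : ℤ → EReal} {L : ℤ → ℤ} :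
    L ∈ bridges T0 T1 x y g ↔ L ∈ OmegaInterOne T0 T1 x y g :=
  Set.Finite.mem_toFinset _

theorem isLogConcave_card_bridges_le_apply (T0 T1 x y : ℤ) (g : ℤ → EReal) (j : ℤ) :
    IsLogConcave fun k => #{L ∈ bridges T0 T1 x y g | k ≤ L j} := by
  refine isLogConcave_card_filter_le_apply (fun K hK L hL => ?_) (fun K hK L hL => ?_) j <;>
    rw [mem_bridges] at hK hL ⊢
  · exact inf_mem_omegaInterOne hK (add_const_mem_omegaInterOne hL 1) (by omega) (by omega)
      fun r => le_add_of_nonneg_right (by norm_num)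
  · exact sup_mem_omegaInterOne (add_const_mem_omegaInterOne hK (-1)) hL (by omega) (by omega)

theorem card_bridges_filter_mul_card_le {T0 T1 x x' y y' : ℤ} {g g' : ℤ → EReal} (hx : x ≤ x')
    (hy : y ≤ y') (hg : g ≤ g') {p : (ℤ → ℤ) → Prop} [DecidablePred p] (hp : IsUpperSet {L | p L}) :
    #{L ∈ bridges T0 T1 x y g | p L} * #(bridges T0 T1 x' y' g') ≤
      #(bridges T0 T1 x y g) * #{L ∈ bridges T0 T1 x' y' g' | p L} := by
  refine card_filter_mul_card_le_of_inf_mem_of_sup_mem (fun K hK L hL => ?_)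
    (fun K hK L hL => ?_) hp <;> rw [mem_bridges] at hK hL ⊢
  · exact inf_mem_omegaInterOne hK hL hx hy hg
  · exact sup_mem_omegaInterOne hK hL hx hy

lemma sub_mul_apply_of_midpoint {R : Type*} [CommRing R] {f : ℤ → R} {T0 T1 : ℤ}
    (hf : ∀ i ∈ Set.Ioo T0 T1, f i + f i = f (i - 1) + f (i + 1)) {j : ℤ}
    (hj : j ∈ Set.Icc T0 T1) :
    ((T1 - T0 : ℤ) : R) * f j = (T1 - j : ℤ) * f T0 + (j - T0 : ℤ) * f T1 := by
  have hincr : ∀ i, T0 ≤ i → i < T1 → f (i + 1) - f i = f (T0 + 1) - f T0 := by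
    intro i hi
    induction i, hi using Int.leInduction with
    | base => exact fun _ => rfl
    | succ i hi ih =>
      intro hi'
      have hmid := hf (i + 1) ⟨by omega, hi'⟩
      rw [add_sub_cancel_right] at hmid
      linear_combination ih (by omega) - hmid
  have haffine : ∀ i, T0 ≤ i → i ≤ T1 → f i = f T0 + (i - T0 : ℤ) * (f (T0 + 1) - f T0) := by
    intro i hi
    induction i, hi using Int.leInduction with
    | base => simp
    | succ i hi ih =>
      intro hi'
      have hprev := ih (by omega)
      have hstep := hincr i hi (by omega)
      push_cast at hprev ⊢
      linear_combination hprev + hstep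
  have hfj := haffine j hj.1 hj.2
  have hfT1 := haffine T1 (hj.1.trans hj.2) le_rfl
  push_cast at hfj hfT1 ⊢
  linear_combination ((T1 : R) - T0) * hfj - ((j : R) - T0) * hfT1

theorem sub_mul_sum_bridges_bot_apply {T0 T1 j : ℤ} (x y : ℤ) (hj : j ∈ Set.Icc T0 T1) :
    (T1 - T0) * ∑ L ∈ bridges T0 T1 x y ⊥, L j =
      #(bridges T0 T1 x y ⊥) * ((T1 - j) * x + (j - T0) * y) := by
  have hmid : ∀ i ∈ Set.Ioo T0 T1,
      ∑ L ∈ bridges T0 T1 x y ⊥, L i + ∑ L ∈ bridges T0 T1 x y ⊥, L i =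
        ∑ L ∈ bridges T0 T1 x y ⊥, L (i - 1) + ∑ L ∈ bridges T0 T1 x y ⊥, L (i + 1) := by
    intro i hi
    have hmem : ∀ L ∈ bridges T0 T1 x y ⊥, reflectAt i L ∈ bridges T0 T1 x y ⊥ := fun L hL =>
      mem_bridges.2 (reflectAt_mem_omegaInterOne_bot (mem_bridges.1 hL) hi)
    have hreflect : ∑ L ∈ bridges T0 T1 x y ⊥, L i =
        ∑ L ∈ bridges T0 T1 x y ⊥, reflectAt i L i :=
      Finset.sum_nbij' (reflectAt i) (reflectAt i) hmem hmem (fun L _ => reflectAt_involutive i L)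
        (fun L _ => reflectAt_involutive i L) fun L _ => by rw [reflectAt_involutive i L]
    simp only [reflectAt_self, Finset.sum_sub_distrib, Finset.sum_add_distrib] at hreflect
    linarith
  have hT0 : ∑ L ∈ bridges T0 T1 x y ⊥, L T0 = #(bridges T0 T1 x y ⊥) * x := by
    rw [Finset.sum_congr rfl fun L hL => (mem_bridges.1 hL).2.1, Finset.sum_const, nsmul_eq_mul]
  have hT1 : ∑ L ∈ bridges T0 T1 x y ⊥, L T1 = #(bridges T0 T1 x y ⊥) * y := by
    rw [Finset.sum_congr rfl fun L hL => (mem_bridges.1 hL).2.2.1, Finset.sum_const, nsmul_eq_mul]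
  have haffine := sub_mul_apply_of_midpoint hmid hj
  rw [hT0, hT1] at haffine
  push_cast at haffine
  linear_combination haffine

theorem exp_neg_one_mul_card_bridges_le {T0 T1 x x' y y' : ℤ} (g : ℤ → EReal) (hT : T0 < T1)
    (hxy : x ≤ y) (hx : x ≤ x') (hy : y ≤ y') {j : ℤ} (hj : j ∈ Set.Icc T0 T1) {m : ℤ}
    (hm : (T1 - T0) * m ≤ (T1 - j) * x + (j - T0) * y) :
    Real.exp (-1) * #(bridges T0 T1 x' y' g) ≤ #{L ∈ bridges T0 T1 x' y' g | m ≤ L j} := by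
  have hpos : (0 : ℝ) < #(bridges T0 T1 x y ⊥) := by
    obtain ⟨L, hL⟩ := nonempty_omegaInterOne_bot hT hxy
    exact Nat.cast_pos.2 (Finset.card_pos.2 ⟨L, mem_bridges.2 hL⟩)
  have hmean : m * #(bridges T0 T1 x y ⊥) ≤ ∑ L ∈ bridges T0 T1 x y ⊥, L j := by
    refine le_of_mul_le_mul_left ?_ (sub_pos.2 hT)
    rw [sub_mul_sum_bridges_bot_apply x y hj, ← mul_assoc, mul_comm (#_ : ℤ)]
    gcongr
  have hfree : Real.exp (-1) * #(bridges T0 T1 x y ⊥) ≤ #{L ∈ bridges T0 T1 x y ⊥ | m ≤ L j} :=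
    exp_neg_one_mul_card_le_card_filter_le (isLogConcave_card_bridges_le_apply T0 T1 x y ⊥ j) hmean
  have hup : IsUpperSet {L : ℤ → ℤ | m ≤ L j} := fun _ _ hKL hK => le_trans hK (hKL j)
  have hdom : (#{L ∈ bridges T0 T1 x y ⊥ | m ≤ L j} : ℝ) * #(bridges T0 T1 x' y' g) ≤
      #(bridges T0 T1 x y ⊥) * #{L ∈ bridges T0 T1 x' y' g | m ≤ L j} := by
    exact_mod_cast card_bridges_filter_mul_card_le hx hy bot_le hup
  refine le_of_mul_le_mul_left ?_ hpos
  calc (#(bridges T0 T1 x y ⊥) : ℝ) * (Real.exp (-1) * #(bridges T0 T1 x' y' g))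
      = Real.exp (-1) * #(bridges T0 T1 x y ⊥) * #(bridges T0 T1 x' y' g) := by ring
    _ ≤ #{L ∈ bridges T0 T1 x y ⊥ | m ≤ L j} * #(bridges T0 T1 x' y' g) := by gcongr
    _ ≤ #(bridges T0 T1 x y ⊥) * #{L ∈ bridges T0 T1 x' y' g | m ≤ L j} := hdom

/-! ### From counting to probability -/

namespace UniformOn

variable {Ω : Type*} [MeasurableSpace Ω] {P : Measure Ω} [IsProbabilityMeasure P]

section Finset

variable {E : Type*} {X : Ω → E} {S : Finset E}

lemma card_ne_zero (h : UniformOn P X (S : Set E)) : #S ≠ 0 := by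
  obtain ⟨ω⟩ := nonempty_of_isProbabilityMeasure P
  exact Finset.card_ne_zero.2 ⟨X ω, h.1 ω⟩

theorem measure_eq_card_filter_div (h : UniformOn P X (S : Set E)) (A : E → Prop)
    [DecidablePred A] : P {ω | A (X ω)} = #{e ∈ S | A e} / #S := by
  have hne := h.card_ne_zero
  obtain ⟨hmem, hpoint⟩ := h
  -- The fibres of `X` need not be measurable, so the lower bound comes from the upper bound for
  -- the complementary event.
  have hupper (B : E → Prop) [DecidablePred B] : P {ω | B (X ω)} ≤ #{e ∈ S | B e} / #S := by
    have hcover : {ω | B (X ω)} ⊆ ⋃ e ∈ ({e ∈ S | B e} : Finset E), {ω | X ω = e} := fun ω hω =>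
      Set.mem_biUnion (Finset.mem_coe.2 (Finset.mem_filter.2 ⟨hmem ω, hω⟩)) rfl
    calc P {ω | B (X ω)} ≤ ∑ e ∈ S with B e, P {ω | X ω = e} :=
          (measure_mono hcover).trans (measure_biUnion_finset_le _ _)
      _ = #{e ∈ S | B e} / #S := by
          rw [Finset.sum_congr rfl fun e he => hpoint e (Finset.mem_filter.1 he).1,
            Finset.sum_const, nsmul_eq_mul, Nat.card_coe_set_eq, Set.ncard_coe_finset,
            div_eq_mul_inv]
  refine (hupper A).antisymm ?_
  have hfinite : (#{e ∈ S | ¬ A e} : ℝ≥0∞) / #S ≠ ⊤ :=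
    ENNReal.div_ne_top (ENNReal.natCast_ne_top _) (Nat.cast_ne_zero.2 hne)
  refine (ENNReal.add_le_add_iff_right hfinite).1 ?_
  calc (#{e ∈ S | A e} : ℝ≥0∞) / #S + #{e ∈ S | ¬ A e} / #S = 1 := by
        rw [← ENNReal.add_div, ← Nat.cast_add, Finset.card_filter_add_card_filter_not,
          ENNReal.div_self (Nat.cast_ne_zero.2 hne) (ENNReal.natCast_ne_top _)]
    _ = P ({ω | A (X ω)} ∪ {ω | A (X ω)}ᶜ) := by rw [Set.union_compl_self, measure_univ]
    _ ≤ P {ω | A (X ω)} + P {ω | ¬ A (X ω)} := measure_union_le _ _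
    _ ≤ P {ω | A (X ω)} + #{e ∈ S | ¬ A e} / #S := by gcongr; exact hupper _

lemma ofReal_le_measure (h : UniformOn P X (S : Set E)) {A : E → Prop} [DecidablePred A] {c : ℝ}
    (hc : c * #S ≤ #{e ∈ S | A e}) : ENNReal.ofReal c ≤ P {ω | A (X ω)} := by
  rw [h.measure_eq_card_filter_div A, ENNReal.le_div_iff_mul_le
    (.inl (Nat.cast_ne_zero.2 h.card_ne_zero)) (.inl (ENNReal.natCast_ne_top _)),
    ← ENNReal.ofReal_natCast (#S), ← ENNReal.ofReal_mul' (Nat.cast_nonneg _),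
    ← ENNReal.ofReal_natCast]
  exact ENNReal.ofReal_le_ofReal hc

end Finset

variable {T0 T1 x y : ℤ} {g : ℤ → EReal} {Q : Ω → ℤ → ℤ}

theorem exp_neg_one_le_measure_line_le_interpZ
    (hQ : UniformOn P Q (OmegaInterOne T0 T1 x y g)) (hT : T0 < T1) {a b : ℝ} (hab : a ≤ b)
    (hax : a ≤ x) (hby : b ≤ y) {s : ℝ} (hs : s ∈ Set.Icc (T0 : ℝ) T1) :
    ENNReal.ofReal (Real.exp (-1)) ≤
      P {ω | (T1 - s) / (T1 - T0) * a + (s - T0) / (T1 - T0) * b - ((b - a) / (T1 - T0) + 1) ≤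
        interpZ (Q ω) s} := by
  have hT' : (0 : ℝ) < T1 - T0 := sub_pos.2 (Int.cast_lt.2 hT)
  have hj : ⌊s⌋ ∈ Set.Icc T0 T1 :=
    ⟨Int.le_floor.2 hs.1, Int.cast_le.1 ((Int.floor_le s).trans hs.2)⟩
  have hj0 : (0 : ℝ) ≤ ⌊s⌋ - T0 := sub_nonneg.2 (Int.cast_le.2 hj.1)
  have hj1 : (0 : ℝ) ≤ T1 - ⌊s⌋ := sub_nonneg.2 (Int.cast_le.2 hj.2)
  set line : ℝ := ((T1 - ⌊s⌋) * a + (⌊s⌋ - T0) * b) / (T1 - T0) with hline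
  have hm : (T1 - T0) * ⌊line⌋ ≤ (T1 - ⌊s⌋) * ⌈a⌉ + (⌊s⌋ - T0) * ⌈b⌉ := by
    have : ((T1 : ℝ) - T0) * ⌊line⌋ ≤ (T1 - ⌊s⌋) * ⌈a⌉ + (⌊s⌋ - T0) * ⌈b⌉ := by
      calc ((T1 : ℝ) - T0) * ⌊line⌋ ≤ (T1 - T0) * line := by gcongr; exact Int.floor_le line
        _ = (T1 - ⌊s⌋) * a + (⌊s⌋ - T0) * b := mul_div_cancel₀ _ hT'.ne'
        _ ≤ (T1 - ⌊s⌋) * ⌈a⌉ + (⌊s⌋ - T0) * ⌈b⌉ := by gcongr <;> exact Int.le_ceil _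
    exact_mod_cast this
  have hQ' : UniformOn P Q (bridges T0 T1 x y g : Set (ℤ → ℤ)) := by
    rwa [bridges, Set.Finite.coe_toFinset]
  have hprob := hQ'.ofReal_le_measure <| exp_neg_one_mul_card_bridges_le g hT (Int.ceil_mono hab)
    (Int.ceil_le.2 hax) (Int.ceil_le.2 hby) hj hm
  refine hprob.trans (measure_mono fun ω hω => ?_)
  have hgap : (T1 - s) / (T1 - T0) * a + (s - T0) / (T1 - T0) * b =
      line + (s - ⌊s⌋) * ((b - a) / (T1 - T0)) := by
    rw [hline]
    field_simp
    ring
  have hslope : (s - ⌊s⌋) * ((b - a) / (T1 - T0)) ≤ (b - a) / (T1 - T0) :=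
    mul_le_of_le_one_left (div_nonneg (sub_nonneg.2 hab) hT'.le)
      (by linarith [Int.lt_floor_add_one s])
  calc (T1 - s) / (T1 - T0) * a + (s - T0) / (T1 - T0) * b - ((b - a) / (T1 - T0) + 1)
      ≤ line - 1 := by linarith
    _ ≤ ⌊line⌋ := by linarith [Int.lt_floor_add_one line]
    _ ≤ Q ω ⌊s⌋ := Int.cast_le.2 hω
    _ ≤ interpZ (Q ω) s := (hQ.1 ω).1.apply_le_interpZ s

end UniformOn

lemma inv_three_le_ofReal_exp_neg_one : (3 : ℝ≥0∞)⁻¹ ≤ ENNReal.ofReal (Real.exp (-1)) := by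
  rw [Real.exp_neg, ENNReal.ofReal_inv_of_pos (Real.exp_pos 1), ENNReal.inv_le_inv]
  exact ENNReal.ofReal_le_of_le_toReal (by simpa using Real.exp_one_lt_three.le)

theorem being_high_sometimes_general (p M : ℝ) {e : ℕ → ℝ} (he : Tendsto e atTop atTop) :
    ∃ N2 : ℕ, ∀ M1 M2 : ℝ, M2 - M1 ≤ M → ∀ n : ℕ, N2 ≤ n →
      ∀ x y : ℤ, M1 * Real.sqrt n ≤ (x : ℝ) → p * n + M2 * Real.sqrt n ≤ (y : ℝ) →
      ∀ g : ℤ → EReal, ∀ s ∈ Set.Icc (0 : ℝ) n,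
      ∀ {Ω : Type*} [MeasurableSpace Ω] (P : Measure Ω) [IsProbabilityMeasure P],
      ∀ Q : Ω → ℤ → ℤ, UniformOn P Q (OmegaInterOne 0 n x y g) →
        ENNReal.ofReal (Real.exp (-1)) ≤ P {ω | ((n - s) / n) * (M1 * Real.sqrt n)
            + (s / n) * (p * n + M2 * Real.sqrt n) - e n ≤ interpZ (Q ω) s} := by
  obtain ⟨N2, hN2⟩ := eventually_atTop.1
    ((he.eventually_ge_atTop (|p| + |M| + 1)).and (eventually_gt_atTop 0))
  refine ⟨N2, fun M1 M2 hM12 n hn x y hx hy g s hs Ω _ P _ Q hQ => ?_⟩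
  obtain ⟨he_n, hn0⟩ := hN2 n hn
  have hn1 : (1 : ℝ) ≤ n := Nat.one_le_cast.2 hn0
  have hsqrt : Real.sqrt n ≤ n := Real.sqrt_le_iff.2 ⟨by positivity, by nlinarith⟩
  set a : ℝ := M1 * Real.sqrt n with ha
  set b : ℝ := p * n + M2 * Real.sqrt n with hb
  -- If `b < a` the line decreases, and it is replaced by the constant `a`.
  have hby : max a b ≤ y := by
    obtain ⟨ω⟩ := nonempty_of_isProbabilityMeasure P
    obtain ⟨hL, hx0, hy1, -⟩ := hQ.1 ω
    have hxy : x ≤ y := hx0 ▸ hy1 ▸ hL.monotone (Int.natCast_nonneg n)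
    exact max_le (hx.trans (Int.cast_le.2 hxy)) hy
  have hslope : (max a b - a) / n ≤ |p| + |M| := by
    have hba : b - a ≤ (|p| + |M|) * n :=
      calc b - a = p * n + (M2 - M1) * Real.sqrt n := by rw [ha, hb]; ring
        _ ≤ |p| * n + |M| * n := by
          gcongr
          · exact le_abs_self p
          · exact hM12.trans (le_abs_self M)
        _ = (|p| + |M|) * n := by ring
    rw [div_le_iff₀ (by positivity), sub_le_iff_le_add, max_le_iff]
    exact ⟨le_add_of_nonneg_left (by positivity), by linarith⟩
  have hline : s / n * b ≤ s / n * max a b :=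
    mul_le_mul_of_nonneg_left (le_max_right a b) (div_nonneg hs.1 n.cast_nonneg)
  have hprob := hQ.exp_neg_one_le_measure_line_le_interpZ (Int.natCast_pos.2 hn0)
    (le_max_left a b) hx hby (s := s) (by simpa using hs)
  refine hprob.trans (measure_mono fun ω hω => ?_)
  refine le_trans ?_ (Set.mem_ofPred_eq ▸ hω)
  simp only [Int.cast_natCast, Int.cast_zero, sub_zero]
  linarith

/-- (Lemma 3.2, being high sometimes.) A geometric bridge conditioned to stay above a lower
boundary, started and ended not too low, is above the corresponding line at any given time
with probability at least `1/3`. -/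
theorem being_high_sometimes (p M : ℝ) (hp : 0 < p) (hM : 0 < M) :
    ∃ N2 : ℕ, ∀ M1 M2 : ℝ, |M1 - M2| ≤ M → ∀ n : ℕ, N2 ≤ n →
      ∀ x y : ℤ, x ≤ y → M1 * Real.sqrt n ≤ (x : ℝ) →
        p * n + M2 * Real.sqrt n ≤ (y : ℝ) →
      ∀ g : ℤ → EReal, (∀ r : ℤ, 0 ≤ r → r ≤ n → g r ≠ ⊤) →
        (OmegaInterOne 0 n x y g).Nonempty →
      ∀ s ∈ Set.Icc (0 : ℝ) n,
      ∀ (Ω : Type) (_ : MeasurableSpace Ω) (P : Measure Ω), IsProbabilityMeasure P →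
      ∀ Q : Ω → ℤ → ℤ, UniformOn P Q (OmegaInterOne 0 n x y g) →
        (3 : ℝ≥0∞)⁻¹ ≤ P {ω | ((n - s) / n) * (M1 * Real.sqrt n)
            + (s / n) * (p * n + M2 * Real.sqrt n) - 3 * (n : ℝ) ^ ((1 : ℝ) / 4)
            ≤ interpZ (Q ω) s} := by
  obtain ⟨N2, h⟩ := being_high_sometimes_general p M <| (tendsto_rpow_atTop (y := 1 / 4)
    (by norm_num)).comp tendsto_natCast_atTop_atTop |>.const_mul_atTop (zero_lt_three' ℝ)
  exact ⟨N2, fun M1 M2 hM12 n hn x y _ hx hy g _ _ s hs Ω _ P _ Q hQ =>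
    inv_three_le_ofReal_exp_neg_one.trans <|
      h M1 M2 (neg_sub M1 M2 ▸ (neg_le_abs _).trans hM12) n hn x y hx hy g s hs P Q hQ⟩
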